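/- arXiv:2306.17081 — 2 statements merged into one kernel-verified Lean document; each statement's English description precedes it below -/
import Mathlib

section
/- Let q be a prime power, m ≥ 2, ρ and t positive integers with ρ ≤ m. Define U = {(x_1, x_1^q, …, x_1^{q^{ρ−1}}, …, x_{t−1}, x_{t−1}^q, …, x_{t−1}^{q^{ρ−1}}, a_1, …, a_ρ) : x_i ∈ F_{q^m}, a_j ∈ F_q} ⊆ F_{q^m}^{ρt}. Then for every v ∈ F_{q^m}^{ρt} there exist u_1, …, u_ρ ∈ U such that v ∈ ⟨u_1, …, u_ρ⟩_{F_{q^m}}. -/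
open Polynomial in
theorem aux_ext {F K : Type*} [Field F] [Field K] [Algebra F K] [FiniteDimensional F K]
    (S : Submodule F K) (k : ℕ) (h1 : Module.finrank F S ≤ k) :
    k ≤ Module.finrank F K →
    ∃ l : Fin k → K, LinearIndependent F l ∧ S ≤ Submodule.span F (Set.range l) := by
  induction k, h1 using Nat.le_induction with
  | base =>
    intro _
    let b := Module.finBasis F S
    refine ⟨fun i => (b i : K), b.linearIndependent.map' S.subtype (by simp), ?_⟩
    have : Set.range (fun i => (b i : K)) = S.subtype '' Set.range b := by
      rw [← Set.range_comp]; rfl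
    rw [this, Submodule.span_image, b.span_eq]
    simp
  | succ k hk ih =>
    intro h
    obtain ⟨l, hl, hS⟩ := ih (by omega)
    obtain ⟨x, hx⟩ := exists_linearIndependent_snoc_of_lt_finrank hl (by omega)
    refine ⟨_, hx, hS.trans (Submodule.span_mono ?_)⟩
    rintro _ ⟨i, rfl⟩
    exact ⟨i.castSucc, by simp⟩

open Polynomial in
theorem aux_moore {F K : Type*} [Field F] [Field K] [Algebra F K] [Fintype F] [Fintype K]
    (p n q m r : ℕ) [Fact p.Prime] [CharP K p] (hn : 0 < n) (hqp : q = p ^ n)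
    (hF : Fintype.card F = q) (hK : Fintype.card K = q ^ m) (hr : r ≤ m)
    (l : Fin r → K) (hl : LinearIndependent F l) (w : Fin r → K) :
    ∃ x : Fin r → K, ∀ j : Fin r, ∑ i, l i * x i ^ q ^ (j : ℕ) = w j := by
  have hq1 : 1 < q := by rw [← hF]; exact Fintype.one_lt_card
  have hsum : ∀ (f : Fin r → K) (k : ℕ), (∑ i, f i) ^ q ^ k = ∑ i, f i ^ q ^ k := by
    intro f k
    rw [hqp, ← pow_mul]
    exact sum_pow_char_pow p (n * k) Finset.univ f
  have hfix : ∀ a : K, a ^ q ^ m = a := by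
    intro a; rw [← hK]; exact FiniteField.pow_card a
  have hfixF : ∀ (a : F) (k : ℕ), (algebraMap F K a) ^ q ^ k = algebraMap F K a := by
    intro a k
    rw [← map_pow, ← hF, FiniteField.pow_card_pow]
  let M : Matrix (Fin r) (Fin r) K := Matrix.of fun j i => l i ^ q ^ (m - (j : ℕ))
  have hM : IsUnit M := by
    rw [← Matrix.vecMul_injective_iff_isUnit]
    rw [← Matrix.coe_vecMulLinear, ← LinearMap.ker_eq_bot, LinearMap.ker_eq_bot']
    intro c hc
    have hc' : ∀ i, ∑ j : Fin r, c j * l i ^ q ^ (m - (j : ℕ)) = 0 := by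
      intro i
      have := congrFun hc i
      simpa [Matrix.vecMul, dotProduct, M] using this
    have hc2 : ∀ i, ∑ j : Fin r, c j ^ q ^ (r - 1) * l i ^ q ^ (r - 1 - (j : ℕ)) = 0 := by
      intro i
      have h := congrArg (fun z => z ^ q ^ (r - 1)) (hc' i)
      simp only [hsum] at h
      rw [zero_pow (by positivity)] at h
      rw [← h]
      refine Finset.sum_congr rfl fun j _ => ?_
      rw [mul_pow, ← pow_mul, ← pow_add]
      have hj := j.2
      have : m - (j : ℕ) + (r - 1) = m + (r - 1 - j) := by omega
      rw [this, pow_add, pow_mul, hfix]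
    let P : K[X] := ∑ j : Fin r, C (c j ^ q ^ (r - 1)) * X ^ q ^ (r - 1 - (j : ℕ))
    have hP : P = 0 := by
      let f : (Fin r → F) → K := fun a => ∑ i, a i • l i
      have hf : Function.Injective f := by
        intro a b hab
        have h0 : ∑ i, (a i - b i) • l i = 0 := by
          simp only [sub_smul, Finset.sum_sub_distrib]
          exact sub_eq_zero.mpr hab
        funext i
        exact sub_eq_zero.mp (Fintype.linearIndependent_iff.mp hl _ h0 i)
      refine eq_zero_of_natDegree_lt_card_of_eval_eq_zero P hf ?_ ?_
      · intro a
        simp only [P, f, eval_finset_sum, eval_mul, eval_C, eval_pow, eval_X, hsum,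
          Algebra.smul_def, mul_pow, hfixF, Finset.mul_sum]
        rw [Finset.sum_comm]
        refine Finset.sum_eq_zero fun i _ => ?_
        rw [← mul_zero (algebraMap F K (a i)), ← hc2 i, Finset.mul_sum]
        exact Finset.sum_congr rfl fun j _ => by ring
      · rw [Fintype.card_fun, hF, Fintype.card_fin]
        rcases Nat.eq_zero_or_pos r with h0 | h0
        · subst h0; simp [P]
        · refine lt_of_le_of_lt ?_ (Nat.pow_lt_pow_right hq1 (Nat.sub_lt h0 one_pos))
          refine natDegree_sum_le_of_forall_le _ _ fun j _ => ?_
          refine (natDegree_C_mul_X_pow_le _ _).trans ?_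
          exact Nat.pow_le_pow_right hq1.le (Nat.sub_le _ _)
    funext j
    have h := congrArg (fun Q => Q.coeff (q ^ (r - 1 - (j : ℕ)))) hP
    simp only [P, finset_sum_coeff, coeff_C_mul, coeff_X_pow, coeff_zero] at h
    rw [Finset.sum_eq_single j] at h
    · simpa [pow_eq_zero_iff (show q ^ (r - 1) ≠ 0 by positivity)] using h
    · intro b _ hb
      rw [if_neg, mul_zero]
      intro he
      have := Nat.pow_right_injective hq1 he
      apply hb
      ext
      have := j.2
      have := b.2
      omega
    · simp
  obtain ⟨x, hx⟩ := Matrix.mulVec_surjective_iff_isUnit.mpr hM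
    (fun j => w j ^ q ^ (m - (j : ℕ)))
  refine ⟨x, fun j => ?_⟩
  have h := congrArg (fun z => z ^ q ^ (j : ℕ)) (congrFun hx j)
  simp only [Matrix.mulVec, dotProduct, M, Matrix.of_apply, hsum] at h
  have hj : m - (j : ℕ) + j = m := by have := j.2; omega
  simpa only [mul_pow, ← pow_mul, ← pow_add, hj, hfix] using h


/-- The subspace `U = {(x_1,…,x_1^{q^{ρ-1}},…,x_{t-1},…,x_{t-1}^{q^{ρ-1}},a_1,…,a_ρ)}`
of `F_{q^m}^{ρt}` is rank `ρ`-saturating: every vector lies in the `F_{q^m}`-span of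
`ρ` elements of `U`. -/
theorem stmt6 (q m ρ t : ℕ) (hq : ∃ p n : ℕ, p.Prime ∧ 0 < n ∧ q = p ^ n)
    (hm : 2 ≤ m) (hρ : 0 < ρ) (hρm : ρ ≤ m) (ht : 1 ≤ t)
    (K : Type*) [Field K] [Fintype K] (hK : Fintype.card K = q ^ m) :
    ∀ v : (Fin (t - 1) → Fin ρ → K) × (Fin ρ → K),
      ∃ u : Fin ρ → (Fin (t - 1) → Fin ρ → K) × (Fin ρ → K),
        (∀ i, ∃ x : Fin (t - 1) → K, ∃ a : Fin ρ → K,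
          (∀ j, (a j) ^ q = a j) ∧ u i = (fun s (j : Fin ρ) => (x s) ^ q ^ (j : ℕ), a)) ∧
        v ∈ Submodule.span K (Set.range u) := by
  obtain ⟨p, n, hp, hn, hqp⟩ := hq
  haveI : Fact p.Prime := ⟨hp⟩
  have hKp : Fintype.card K = p ^ (n * m) := by rw [hK, hqp, pow_mul]
  haveI : CharP K p := charP_of_card_eq_prime_pow hKp
  letI : Algebra (ZMod p) K := ZMod.algebra K p
  have hfr : Module.finrank (ZMod p) K = n * m := by
    have := Module.card_eq_pow_finrank (K := ZMod p) (V := K)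
    rw [hKp, ZMod.card] at this
    exact (Nat.pow_right_injective hp.two_le this).symm
  obtain ⟨φ⟩ := FiniteField.nonempty_algHom_of_finrank_dvd (F := ZMod p)
    (K := GaloisField p n) (L := K) (by
      rw [hfr, GaloisField.finrank p hn.ne']; exact dvd_mul_right _ _)
  letI : Fintype (GaloisField p n) := Fintype.ofFinite _
  letI : Algebra (GaloisField p n) K := φ.toRingHom.toAlgebra
  have hF : Fintype.card (GaloisField p n) = q := by
    rw [← Nat.card_eq_fintype_card, GaloisField.card p n hn.ne', hqp]
  have hq1 : 1 < q := by rw [← hF]; exact Fintype.one_lt_card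
  have hfrF : Module.finrank (GaloisField p n) K = m := by
    have := Module.card_eq_pow_finrank (K := GaloisField p n) (V := K)
    rw [hK, hF] at this
    exact (Nat.pow_right_injective hq1 this).symm
  rintro ⟨w, b⟩
  obtain ⟨l, hl, hS⟩ := aux_ext (F := GaloisField p n)
    (Submodule.span (GaloisField p n) (Set.range b)) ρ
    (by simpa [Set.finrank] using finrank_range_le_card (R := GaloisField p n) b) (by omega)
  have hb : ∀ j, ∃ a : Fin ρ → GaloisField p n, ∑ i, a i • l i = b j := fun j =>
    (Submodule.mem_span_range_iff_exists_fun _).mp (hS (Submodule.subset_span ⟨j, rfl⟩))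
  choose a ha using hb
  have hx := fun s => aux_moore (F := GaloisField p n) p n q m ρ hn hqp hF hK hρm l hl (w s)
  choose x hx using hx
  refine ⟨fun i => (fun s j => (x s i) ^ q ^ (j : ℕ),
    fun j => algebraMap (GaloisField p n) K (a j i)), fun i => ⟨fun s => x s i, _, ?_, rfl⟩, ?_⟩
  · intro j
    rw [← map_pow, ← hF, FiniteField.pow_card]
  · rw [Submodule.mem_span_range_iff_exists_fun]
    refine ⟨l, ?_⟩
    ext s j
    · simpa [Prod.fst_sum, Finset.sum_apply] using hx s j
    · have := ha s
      simp only [Algebra.smul_def] at this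
      simpa [Prod.snd_sum, Finset.sum_apply, mul_comm] using this
end

section
/- Let q be a prime power and k, k', ρ, ρ', m positive integers with ρ ≤ min{k, m}, ρ' ≤ min{k', m}, and ρ + ρ' ≤ min{k + k', m}. If U ⊆ F_{q^m}^k is a rank ρ-saturating system and U' ⊆ F_{q^m}^{k'} is a rank ρ'-saturating system, then U ⊕ U' ⊆ F_{q^m}^{k+k'} is a rank ρ''-saturating system with ρ'' ≤ ρ + ρ'; i.e., every v ∈ F_{q^m}^{k+k'} lies in the F_{q^m}-span of ρ + ρ' elements of U ⊕ U'. In particular s_{q^m/q}(k+k', ρ+ρ') ≤ s_{q^m/q}(k, ρ) + s_{q^m/q}(k', ρ'). -/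
/-- Direct sums of saturating systems: if `U` is rank `ρ`-saturating in `F_{q^m}^k`
and `U'` is rank `ρ'`-saturating in `F_{q^m}^{k'}`, then every vector of
`F_{q^m}^{k+k'}` lies in the `F_{q^m}`-span of `ρ + ρ'` elements of `U ⊕ U'`. -/
theorem stmt18 (q m k k' ρ ρ' : ℕ) (hq : ∃ p n : ℕ, p.Prime ∧ 0 < n ∧ q = p ^ n)
    (hρ : ρ ≤ min k m) (hρ' : ρ' ≤ min k' m) (hsum : ρ + ρ' ≤ min (k + k') m)
    (F K : Type*) [Field F] [Field K] [Algebra F K]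
    [Fintype F] [Fintype K] (hF : Fintype.card F = q) (hcard : Fintype.card K = q ^ m)
    (U : Submodule F (Fin k → K)) (U' : Submodule F (Fin k' → K))
    (hU : ∀ v : Fin k → K, ∃ u : Fin ρ → (Fin k → K),
      (∀ i, u i ∈ U) ∧ v ∈ Submodule.span K (Set.range u))
    (hU' : ∀ v : Fin k' → K, ∃ u : Fin ρ' → (Fin k' → K),
      (∀ i, u i ∈ U') ∧ v ∈ Submodule.span K (Set.range u)) :
    ∀ v : (Fin k → K) × (Fin k' → K), ∃ u : Fin (ρ + ρ') → (Fin k → K) × (Fin k' → K),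
      (∀ i, u i ∈ U.prod U') ∧ v ∈ Submodule.span K (Set.range u) := by
  rintro ⟨v, w⟩
  obtain ⟨a, ha, hv⟩ := hU v
  obtain ⟨b, hb, hw⟩ := hU' w
  refine ⟨Fin.append (fun i => (a i, 0)) (fun j => (0, b j)), ?_, ?_⟩
  · intro i
    refine Fin.addCases (fun i => ?_) (fun j => ?_) i
    · rw [Fin.append_left]
      exact ⟨ha i, U'.zero_mem⟩
    · rw [Fin.append_right]
      exact ⟨U.zero_mem, hb j⟩
  · rw [Submodule.mem_span_range_iff_exists_fun] at hv hw ⊢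
    obtain ⟨c, hc⟩ := hv
    obtain ⟨d, hd⟩ := hw
    refine ⟨Fin.append c d, ?_⟩
    rw [Fin.sum_univ_add]
    simp only [Fin.append_left, Fin.append_right, Prod.smul_mk, smul_zero]
    ext1
    · simp [Prod.fst_sum, hc]
    · simp [Prod.snd_sum, hd]
end
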